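/- If b ≠ 0, then the induced module W_{a,b} is a simple D^{≥0}-module for every a ∈ k^×. -/

import Mathlib

open FreeAlgebra

/-- Generators of the double of the Jordan plane. -/
inductive JGen : Type
  | u | v | zeta | g | ginv | x | y

variable (k : Type) [Field k] [IsAlgClosed k] [CharZero k]

/-- The defining relations of the double of the Jordan plane. -/
inductive JRel : FreeAlgebra k JGen → FreeAlgebra k JGen → Prop
  | gginv : JRel (ι k .g * ι k .ginv) 1
  | ginvg : JRel (ι k .ginv * ι k .g) 1
  | zg : JRel (ι k .zeta * ι k .g) (ι k .g * ι k .zeta)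
  | gx : JRel (ι k .g * ι k .x) (ι k .x * ι k .g)
  | gy : JRel (ι k .g * ι k .y) (ι k .y * ι k .g + ι k .x * ι k .g)
  | zy : JRel (ι k .zeta * ι k .y) (ι k .y * ι k .zeta + ι k .y)
  | zx : JRel (ι k .zeta * ι k .x) (ι k .x * ι k .zeta + ι k .x)
  | ug : JRel (ι k .u * ι k .g) (ι k .g * ι k .u)
  | vg : JRel (ι k .v * ι k .g) (ι k .g * ι k .v + ι k .g * ι k .u)
  | vz : JRel (ι k .v * ι k .zeta) (ι k .zeta * ι k .v + ι k .v)
  | uz : JRel (ι k .u * ι k .zeta) (ι k .zeta * ι k .u + ι k .u)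
  | yx : JRel (ι k .y * ι k .x) (ι k .x * ι k .y - (1/2 : k) • (ι k .x * ι k .x))
  | vu : JRel (ι k .v * ι k .u) (ι k .u * ι k .v - (1/2 : k) • (ι k .u * ι k .u))
  | ux : JRel (ι k .u * ι k .x) (ι k .x * ι k .u)
  | vx : JRel (ι k .v * ι k .x) (ι k .x * ι k .v + (1 - ι k .g) + ι k .x * ι k .u)
  | uy : JRel (ι k .u * ι k .y) (ι k .y * ι k .u + (1 - ι k .g))
  | vy : JRel (ι k .v * ι k .y) (ι k .y * ι k .v - ι k .g * ι k .zeta + ι k .y * ι k .u)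

/-- The double of the Jordan plane, as the presented algebra. -/
def D : Type := RingQuot (JRel k)

noncomputable instance : Ring (D k) := inferInstanceAs (Ring (RingQuot (JRel k)))
noncomputable instance : Algebra k (D k) := inferInstanceAs (Algebra k (RingQuot (JRel k)))

/-- The canonical projection from the free algebra onto `D`. -/
noncomputable def Dmk : FreeAlgebra k JGen →ₐ[k] D k := RingQuot.mkAlgHom k (JRel k)

noncomputable def DU : D k := Dmk k (ι k .u)
noncomputable def DV : D k := Dmk k (ι k .v)
noncomputable def DZ : D k := Dmk k (ι k .zeta)
noncomputable def DG : D k := Dmk k (ι k .g)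
noncomputable def DGinv : D k := Dmk k (ι k .ginv)
noncomputable def DX : D k := Dmk k (ι k .x)
noncomputable def DY : D k := Dmk k (ι k .y)

set_option synthInstance.maxHeartbeats 1000000
set_option maxHeartbeats 2000000

/-- The subalgebra `D^{≥0}` of `D` generated by `g, g⁻¹, ζ, u, v`. -/
noncomputable def Dgeq : Subalgebra k (D k) :=
  Algebra.adjoin k {DG k, DGinv k, DZ k, DU k, DV k}

noncomputable def sG : Dgeq k := ⟨DG k, Algebra.subset_adjoin (by simp)⟩
noncomputable def sGinv : Dgeq k := ⟨DGinv k, Algebra.subset_adjoin (by simp)⟩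
noncomputable def sZ : Dgeq k := ⟨DZ k, Algebra.subset_adjoin (by simp)⟩
noncomputable def sU : Dgeq k := ⟨DU k, Algebra.subset_adjoin (by simp)⟩
noncomputable def sV : Dgeq k := ⟨DV k, Algebra.subset_adjoin (by simp)⟩

/-- The left ideal of `D^{≥0}` generated by `g - a`, `v - b` and `u`
(the annihilator of the generator `x_{a,b}` of the one-dimensional `H`-module `k_{a,b}`). -/
noncomputable def WIdeal (a b : k) : Submodule (Dgeq k) (Dgeq k) :=
  Submodule.span (Dgeq k)
    {sG k - algebraMap k (Dgeq k) a, sV k - algebraMap k (Dgeq k) b, sU k}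

/-- The induced module `W_{a,b} = D^{≥0} ⊗_H k_{a,b}`, realized as the quotient of `D^{≥0}`
by the left ideal `WIdeal a b`. -/
noncomputable abbrev Wmod (a b : k) : Type := (Dgeq k) ⧸ (WIdeal k a b)

/-- The class of `d ∈ D^{≥0}` in `W_{a,b}`; the class of `1` corresponds to `1 ⊗ x_{a,b}`. -/
noncomputable def wmk (a b : k) : Dgeq k → Wmod k a b := Submodule.Quotient.mk

section Gen
open Polynomial

lemma aux_comm {k A : Type*} [Field k] [Ring A] [Algebra k A] (z w : A)
    (h : w * z = z * w + w) (p : k[X]) :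
    w * aeval z p = aeval z (p.comp (X + 1)) * w := by
  induction p using Polynomial.induction_on' with
  | add p q hp hq => simp only [map_add, add_comp, mul_add, add_mul, hp, hq]
  | monomial n c =>
    have h1 : ∀ n : ℕ, w * z ^ n = (z + 1) ^ n * w := by
      intro n
      induction n with
      | zero => simp
      | succ n ih => rw [pow_succ, ← mul_assoc, ih, mul_assoc, h, pow_succ]; noncomm_ring
    rw [← C_mul_X_pow_eq_monomial]
    simp only [map_mul, aeval_C, map_pow, aeval_X, mul_comp, C_comp, pow_comp, X_comp, map_add,
      map_one]
    rw [← mul_assoc, ← Algebra.commutes, mul_assoc, h1, mul_assoc]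

lemma deg_diff {k : Type*} [Field k] [CharZero k] (p : k[X]) (hp : p.natDegree ≠ 0) :
    p.comp (X + 1) - p ≠ 0 ∧ (p.comp (X + 1) - p).natDegree < p.natDegree := by
  have hp0 : p ≠ 0 := by rintro rfl; simp at hp
  have h1 : (X + 1 : k[X]) = X + C 1 := by simp
  have hd : (p.comp (X + 1)).natDegree = p.natDegree := by
    rw [natDegree_comp, h1, natDegree_X_add_C, mul_one]
  have hne : p.comp (X + 1) - p ≠ 0 := by
    intro h
    rw [sub_eq_zero] at h
    have hs : ∀ n : ℕ, p.eval (n : k) = p.eval 0 := by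
      intro n
      induction n with
      | zero => simp
      | succ n ih =>
        rw [← ih]
        conv_rhs => rw [← h]
        simp [eval_comp]
    have : p = C (p.eval 0) := by
      apply Polynomial.eq_of_infinite_eval_eq
      apply Set.Infinite.mono (s := Set.range (fun n : ℕ => (n : k)))
      · rintro _ ⟨n, rfl⟩
        simp [hs]
      · exact Set.infinite_range_of_injective Nat.cast_injective
    rw [this] at hp
    simp at hp
  refine ⟨hne, ?_⟩
  have hlc : (p.comp (X + 1)).leadingCoeff = p.leadingCoeff := by
    rw [h1, leadingCoeff_comp (by rw [natDegree_X_add_C]; exact one_ne_zero),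
      leadingCoeff_X_add_C, one_pow, mul_one]
  apply natDegree_lt_natDegree hne
  have hc0 : p.comp (X + 1) ≠ 0 := by
    rw [← leadingCoeff_ne_zero, hlc]; simpa using hp0
  have := degree_sub_lt_left (p := p.comp (X+1)) (q := p)
    (by rw [degree_eq_natDegree hc0, degree_eq_natDegree hp0, hd]) hc0 hlc
  rwa [degree_eq_natDegree hc0, hd, ← degree_eq_natDegree hp0] at this

theorem gen_simple {k A : Type*} [Field k] [CharZero k] [Ring A] [Algebra k A]
    (g gi z u v : A) (a b : k) (ha : a ≠ 0) (hb : b ≠ 0)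
    (hgi : gi * g = 1) (hzg : z * g = g * z) (hg : g * gi = 1)
    (hv : v * z = z * v + v) (hu : u * z = z * u + u)
    (htop : ∀ d : A, d ∈ Algebra.adjoin k ({g, gi, z, u, v} : Set A))
    (I : Submodule A A)
    (hI1 : g - algebraMap k A a ∈ I) (hI2 : v - algebraMap k A b ∈ I) (hI3 : u ∈ I)
    (h1 : (1 : A) ∉ I) : IsSimpleModule A (A ⧸ I) := by
  have hgz : ∀ p : k[X], g * aeval z p = aeval z p * g := by
    intro p
    induction p using Polynomial.induction_on' with
    | add p q hp hq => simp only [map_add, mul_add, add_mul, hp, hq]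
    | monomial n c =>
      have h : Commute g (z ^ n) := Commute.pow_right hzg.symm n
      rw [aeval_monomial, ← mul_assoc, ← Algebra.commutes, mul_assoc, h.eq, mul_assoc]
  have hmem : ∀ (d : A) {e : A}, e ∈ I → d * e ∈ I := fun d e he => I.smul_mem d he
  have hgi' : gi - algebraMap k A a⁻¹ ∈ I := by
    have := hmem (algebraMap k A (-a⁻¹) * gi) hI1
    have e : algebraMap k A (-a⁻¹) * gi * (g - algebraMap k A a) = gi - algebraMap k A a⁻¹ := by
      rw [mul_sub, mul_assoc, hgi, mul_assoc, ← Algebra.commutes a gi, ← mul_assoc, ← map_mul,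
        neg_mul, inv_mul_cancel₀ ha]
      simp
      abel
    rwa [e] at this
  have hginvz : ∀ p : k[X], gi * aeval z p = aeval z p * gi := by
    intro p
    calc gi * aeval z p = gi * (aeval z p * g) * gi := by rw [mul_assoc, mul_assoc, hg, mul_one]
      _ = gi * g * aeval z p * gi := by rw [← hgz, ← mul_assoc]
      _ = _ := by rw [hgi, one_mul]
  have scal : ∀ (c : k) (p : k[X]) (s : A), s - algebraMap k A c ∈ I →
      aeval z p * s - aeval z (C c * p) ∈ I := by
    intro c p s hs
    have := hmem (aeval z p) hs
    rw [mul_sub, ← Algebra.commutes] at this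
    simpa using this
  have span : ∀ d : A, ∀ p : k[X], ∃ q : k[X], d * aeval z p - aeval z q ∈ I := by
    intro d
    refine Algebra.adjoin_induction (p := fun d _ => ∀ p : k[X], ∃ q : k[X],
      d * aeval z p - aeval z q ∈ I) ?_ ?_ ?_ ?_ (htop d)
    · intro x hx p
      simp only [Set.mem_insert_iff, Set.mem_singleton_iff] at hx
      rcases hx with rfl | rfl | rfl | rfl | rfl
      · exact ⟨C a * p, by rw [hgz]; exact scal _ _ _ hI1⟩
      · exact ⟨C a⁻¹ * p, by rw [hginvz]; exact scal _ _ _ hgi'⟩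
      · exact ⟨X * p, by simp⟩
      · exact ⟨0, by rw [aux_comm z _ hu, map_zero, sub_zero]; exact hmem _ hI3⟩
      · exact ⟨C b * p.comp (X + 1), by rw [aux_comm z _ hv]; exact scal _ _ _ hI2⟩
    · intro r p
      exact ⟨C r * p, by simp⟩
    · intro x y _ _ hx hy p
      obtain ⟨q, hq⟩ := hx p
      obtain ⟨r, hr⟩ := hy p
      refine ⟨q + r, ?_⟩
      convert I.add_mem hq hr using 1
      rw [map_add]; noncomm_ring
    · intro x y _ _ hx hy p
      obtain ⟨r, hr⟩ := hy p
      obtain ⟨q, hq⟩ := hx r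
      refine ⟨q, ?_⟩
      convert I.add_mem (hmem x hr) hq using 1
      noncomm_ring
  rw [isSimpleModule_iff_isCoatom]
  refine ⟨fun h => h1 (h ▸ Submodule.mem_top), ?_⟩
  intro J hJ
  obtain ⟨hle, d, hdJ, hdI⟩ := SetLike.lt_iff_le_and_exists.mp hJ
  have hJm : ∀ (d : A) {e : A}, e ∈ J → d * e ∈ J := fun d e he => J.smul_mem d he
  have hex : ∃ n : ℕ, ∃ p : k[X], p ≠ 0 ∧ aeval z p ∈ J ∧ p.natDegree = n := by
    obtain ⟨q, hq⟩ := span d 1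
    rw [map_one, mul_one] at hq
    refine ⟨_, q, ?_, ?_, rfl⟩
    · rintro rfl
      apply hdI
      simpa using hq
    · have := J.sub_mem hdJ (hle hq)
      simpa using this
  classical
  obtain ⟨p, hp0, hpJ, hpd⟩ := Nat.find_spec hex
  have hdeg : p.natDegree = 0 := by
    by_contra hne
    obtain ⟨h0, hlt⟩ := deg_diff p hne
    refine Nat.find_min hex (m := (p.comp (X + 1) - p).natDegree) (hpd ▸ hlt) ⟨_, h0, ?_, rfl⟩
    have hvp : aeval z (C b * p.comp (X + 1)) ∈ J := by
      have e1 := hJm v hpJ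
      rw [aux_comm z v hv] at e1
      have e2 := hle (scal b (p.comp (X + 1)) v hI2)
      have := J.sub_mem e1 e2
      simpa using this
    have hvq : aeval z (p.comp (X + 1)) ∈ J := by
      have := hJm (algebraMap k A b⁻¹) hvp
      rw [map_mul, aeval_C, ← mul_assoc, ← map_mul, inv_mul_cancel₀ hb, map_one, one_mul] at this
      exact this
    rw [map_sub]
    exact J.sub_mem hvq hpJ
  obtain ⟨c, rfl⟩ : ∃ c, p = C c := ⟨_, eq_C_of_natDegree_eq_zero hdeg⟩
  have hc : c ≠ 0 := by rintro rfl; simp at hp0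
  have hone : (1 : A) ∈ J := by
    have := hJm (algebraMap k A c⁻¹) hpJ
    rw [aeval_C, ← map_mul, inv_mul_cancel₀ hc, map_one] at this
    exact this
  rw [eq_top_iff]
  intro d _
  simpa using hJm d hone

end Gen

/-- Space of functionals on Laurent monomials `x^i g^j u^m e^n`. -/
abbrev FM : Type := ℤ → ℤ → ℕ → ℕ → k

/-- Action of the generators on the functionals. -/
def opU : Module.End k (FM k) where
  toFun φ := fun i j m n => φ i j (m + 1) n
  map_add' _ _ := rfl
  map_smul' _ _ := rfl

def opX : Module.End k (FM k) where
  toFun φ := fun i j m n => φ (i + 1) j m n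
  map_add' _ _ := rfl
  map_smul' _ _ := rfl

def opG : Module.End k (FM k) where
  toFun φ := fun i j m n => φ i (j + 1) m n
  map_add' _ _ := rfl
  map_smul' _ _ := rfl

def opGi : Module.End k (FM k) where
  toFun φ := fun i j m n => φ i (j - 1) m n
  map_add' _ _ := rfl
  map_smul' _ _ := rfl

def opZ : Module.End k (FM k) where
  toFun φ := fun i j m n => (-(i : k) + m + n) * φ i j m n
  map_add' _ _ := by funext i j m n; simp; ring
  map_smul' _ _ := by funext i j m n; simp; ring

noncomputable def opY : Module.End k (FM k) where
  toFun φ := fun i j m n => ((i : k) / 2 + j) * φ (i + 1) j m n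
    - (m : k) * (φ i (j + 1) (m - 1) n - φ i j (m - 1) n)
  map_add' _ _ := by funext i j m n; simp; ring
  map_smul' _ _ := by funext i j m n; simp; ring

noncomputable def opV : Module.End k (FM k) where
  toFun φ := fun i j m n => φ i j m (n + 1) - ((j : k) - m / 2 + i) * φ i j (m + 1) n
    - (i : k) * (φ (i - 1) j m n - φ (i - 1) (j + 1) m n) - 2 * (n : k) * φ (i - 1) (j + 1) m n
  map_add' _ _ := by funext i j m n; simp; ring
  map_smul' _ _ := by funext i j m n; simp; ring

noncomputable def opGen : JGen → Module.End k (FM k)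
  | .u => opU k
  | .v => opV k
  | .zeta => opZ k
  | .g => opG k
  | .ginv => opGi k
  | .x => opX k
  | .y => opY k

noncomputable def freeRep : FreeAlgebra k JGen →ₐ[k] Module.End k (FM k) :=
  FreeAlgebra.lift k (opGen k)


lemma opU_apply (φ : FM k) (i j : ℤ) (m n : ℕ) : opU k φ i j m n = φ i j (m + 1) n := rfl
lemma opX_apply (φ : FM k) (i j : ℤ) (m n : ℕ) : opX k φ i j m n = φ (i + 1) j m n := rfl
lemma opG_apply (φ : FM k) (i j : ℤ) (m n : ℕ) : opG k φ i j m n = φ i (j + 1) m n := rfl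
lemma opGi_apply (φ : FM k) (i j : ℤ) (m n : ℕ) : opGi k φ i j m n = φ i (j - 1) m n := rfl
lemma opZ_apply (φ : FM k) (i j : ℤ) (m n : ℕ) :
    opZ k φ i j m n = (-(i : k) + m + n) * φ i j m n := rfl
lemma opY_zero (φ : FM k) (i j : ℤ) (n : ℕ) :
    opY k φ i j 0 n = ((i : k) / 2 + j) * φ (i + 1) j 0 n := by
  simp [opY]
lemma opY_succ (φ : FM k) (i j : ℤ) (m n : ℕ) :
    opY k φ i j (m + 1) n = ((i : k) / 2 + j) * φ (i + 1) j (m + 1) n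
    - ((m : k) + 1) * (φ i (j + 1) m n - φ i j m n) := by
  simp [opY]
lemma opV_apply (φ : FM k) (i j : ℤ) (m n : ℕ) :
    opV k φ i j m n = φ i j m (n + 1) - ((j : k) - m / 2 + i) * φ i j (m + 1) n
    - (i : k) * (φ (i - 1) j m n - φ (i - 1) (j + 1) m n)
    - 2 * (n : k) * φ (i - 1) (j + 1) m n := rfl

lemma freeRep_rel (p q : FreeAlgebra k JGen) (h : JRel k p q) : freeRep k p = freeRep k q := by
  cases h <;>
  · simp only [freeRep, map_mul, map_add, map_sub, map_one, map_smul, FreeAlgebra.lift_ι_apply,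
      opGen]
    refine LinearMap.ext fun φ => ?_
    funext i j m n
    rcases m with _ | m <;>
    · simp only [Module.End.mul_apply, LinearMap.add_apply, LinearMap.sub_apply, Pi.add_apply,
        Pi.sub_apply, LinearMap.smul_apply, Pi.smul_apply, Module.End.one_apply, smul_eq_mul,
        opU_apply, opX_apply, opG_apply, opGi_apply, opZ_apply, opY_zero, opY_succ, opV_apply,
        add_sub_cancel_right, sub_add_cancel, Int.cast_add, Int.cast_sub, Int.cast_one,
        Nat.cast_add, Nat.cast_one, Nat.cast_zero, sub_add_eq_add_sub]
      try ring

noncomputable def rep : D k →ₐ[k] Module.End k (FM k) :=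
  RingQuot.liftAlgHom k ⟨freeRep k, fun p q h => freeRep_rel k p q h⟩

lemma rep_mk (p : FreeAlgebra k JGen) : rep k (Dmk k p) = freeRep k p :=
  RingQuot.liftAlgHom_mkAlgHom_apply k (freeRep k) (fun p q h => freeRep_rel k p q h) p

lemma mk_rel {p q : FreeAlgebra k JGen} (h : JRel k p q) : Dmk k p = Dmk k q :=
  RingQuot.mkAlgHom_rel k h

/-- Coefficients of the cyclic vector. -/
def cf (a b : k) : ℕ → ℤ → k
  | 0, _ => 1
  | n + 1, i => b * cf a b n i + ((i : k) * (1 - a) + 2 * a * n) * cf a b n (i - 1)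

noncomputable def lam (a b : k) : FM k := fun i j m n => if m = 0 then a ^ j * cf k a b n i else 0

lemma lam_g (a b : k) (ha : a ≠ 0) : opG k (lam k a b) = a • lam k a b := by
  funext i j m n
  simp only [opG_apply, lam, Pi.smul_apply, smul_eq_mul]
  split_ifs
  · rw [zpow_add_one₀ ha]; ring
  · simp

lemma lam_u (a b : k) : opU k (lam k a b) = 0 := by
  funext i j m n
  simp [opU_apply, lam]

lemma lam_v (a b : k) (ha : a ≠ 0) : opV k (lam k a b) = b • lam k a b := by
  funext i j m n
  simp only [opV_apply, lam, Pi.smul_apply, smul_eq_mul]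
  rcases m with _ | m
  · simp [cf, zpow_add_one₀ ha]; ring
  · simp

lemma one_notMem (a b : k) (ha : a ≠ 0) : (1 : Dgeq k) ∉ WIdeal k a b := by
  intro h
  have key : ∀ d ∈ WIdeal k a b, rep k (d : D k) (lam k a b) = 0 := by
    intro d hd
    refine Submodule.span_induction (p := fun (d : Dgeq k) _ => rep k (d : D k) (lam k a b) = 0)
      ?_ ?_ ?_ ?_ hd
    · intro x hx
      simp only [Set.mem_insert_iff, Set.mem_singleton_iff] at hx
      rcases hx with rfl | rfl | rfl
      · have e : ((sG k - algebraMap k (Dgeq k) a : Dgeq k) : D k)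
            = Dmk k (ι k .g) - algebraMap k (D k) a := rfl
        rw [e, map_sub, rep_mk, AlgHom.commutes]
        simp [freeRep, opGen, lam_g k a b ha]
      · have e : ((sV k - algebraMap k (Dgeq k) b : Dgeq k) : D k)
            = Dmk k (ι k .v) - algebraMap k (D k) b := rfl
        rw [e, map_sub, rep_mk, AlgHom.commutes]
        simp [freeRep, opGen, lam_v k a b ha]
      · have e : (sU k : D k) = Dmk k (ι k .u) := rfl
        rw [e, rep_mk]
        simp [freeRep, opGen, lam_u k a b]
    · simp
    · intro x y _ _ hx hy
      have e : ((x + y : Dgeq k) : D k) = (x : D k) + (y : D k) := rfl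
      rw [e, map_add, LinearMap.add_apply, hx, hy, add_zero]
    · intro c x _ hx
      have e : ((c • x : Dgeq k) : D k) = (c : D k) * (x : D k) := rfl
      rw [e, map_mul, Module.End.mul_apply, hx, LinearMap.map_zero]
  have h1 := key 1 h
  have e : ((1 : Dgeq k) : D k) = 1 := rfl
  rw [e, map_one, Module.End.one_apply] at h1
  have h2 := congrFun (congrFun (congrFun (congrFun h1 0) 0) 0) 0
  simp [lam, cf] at h2

lemma adj_top (d : Dgeq k) :
    d ∈ Algebra.adjoin k ({sG k, sGinv k, sZ k, sU k, sV k} : Set (Dgeq k)) := by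
  have h := Algebra.adjoin_adjoin_coe_preimage (R := k)
    (s := ({DG k, DGinv k, DZ k, DU k, DV k} : Set (D k)))
  have h2 : d ∈ (⊤ : Subalgebra k (Dgeq k)) := trivial
  rw [show (⊤ : Subalgebra k (Dgeq k)) = _ from h.symm] at h2
  refine Algebra.adjoin_mono ?_ h2
  intro x hx
  simp only [Set.mem_preimage, Set.mem_insert_iff, Set.mem_singleton_iff] at hx ⊢
  rcases hx with hx | hx | hx | hx | hx
  · exact Or.inl (Subtype.ext hx)
  · exact Or.inr (Or.inl (Subtype.ext hx))
  · exact Or.inr (Or.inr (Or.inl (Subtype.ext hx)))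
  · exact Or.inr (Or.inr (Or.inr (Or.inl (Subtype.ext hx))))
  · exact Or.inr (Or.inr (Or.inr (Or.inr (Subtype.ext hx))))

/-- if `b ≠ 0`, then `W_{a,b}` is a simple `D^{≥0}`-module for every `a ∈ k^×`. -/
theorem Wab_simple (a b : k) (ha : a ≠ 0) (hb : b ≠ 0) :
    IsSimpleModule (Dgeq k) (Wmod k a b) := by
  have r1 := mk_rel k JRel.ginvg
  have r2 := mk_rel k JRel.zg
  have r3 := mk_rel k JRel.gginv
  have r4 := mk_rel k JRel.vz
  have r5 := mk_rel k JRel.uz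
  simp only [map_mul, map_add, map_one] at r1 r2 r3 r4 r5
  exact gen_simple (k := k) (sG k) (sGinv k) (sZ k) (sU k) (sV k) a b ha hb
    (Subtype.ext r1) (Subtype.ext r2) (Subtype.ext r3) (Subtype.ext r4) (Subtype.ext r5)
    (adj_top k) (WIdeal k a b)
    (Submodule.subset_span (by simp)) (Submodule.subset_span (by simp))
    (Submodule.subset_span (by simp)) (one_notMem k a b ha)
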